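/- With sech t = 1/cosh t and Φₐ(y) = tanh(y)·sech²(y), define Φₚ⁽⁰⁾(y) = (1/8)·(15·tanh(y) + 3y)·Φₐ(y) − (1/4)·tanh²(y) − (1/8)·sinh²(y)·(15·tanh⁴(y) − 25·tanh²(y) + 8) and Φₚ⁽¹⁾(y) = (√2/8)·( sinh(2y) − 4y + 6·tanh(y) − (6y² + 15)·Φₐ(y) + 12·y·sech²(y) ). Then v₀(y) = Φₚ⁽⁰⁾(y/√2) satisfies v₀''(y) + 2·(3·sech²(y/√2) − 1)·v₀(y) = 1 for all y ∈ ℝ, and v₁(y) = Φₚ⁽¹⁾(y/√2) satisfies v₁''(y) + 2·(3·sech²(y/√2) − 1)·v₁(y) = y for all y ∈ ℝ. -/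

import Mathlib

/-- The hyperbolic secant. -/
noncomputable def sech (t : ℝ) : ℝ := 1 / Real.cosh t

/-- The antisymmetric complementary function. -/
noncomputable def Phi_a (y : ℝ) : ℝ := Real.tanh y * (sech y) ^ 2

/-- Particular integral for right-hand side `1`. -/
noncomputable def Phi_p0 (y : ℝ) : ℝ :=
  (1/8) * (15 * Real.tanh y + 3 * y) * Phi_a y - (1/4) * (Real.tanh y) ^ 2
    - (1/8) * (Real.sinh y) ^ 2
      * (15 * (Real.tanh y) ^ 4 - 25 * (Real.tanh y) ^ 2 + 8)

/-- Particular integral for right-hand side `y`. -/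
noncomputable def Phi_p1 (y : ℝ) : ℝ :=
  (Real.sqrt 2 / 8) * (Real.sinh (2 * y) - 4 * y + 6 * Real.tanh y
    - (6 * y ^ 2 + 15) * Phi_a y + 12 * y * (sech y) ^ 2)

theorem hd_sech (t : ℝ) : HasDerivAt sech (-(Real.tanh t * sech t)) t := by
  have hc := (Real.cosh_pos t).ne'
  have h := (Real.hasDerivAt_cosh t).inv hc
  have e : sech = (Real.cosh)⁻¹ := by
    funext x; simp [sech]
  rw [e]
  refine h.congr_deriv ?_
  simp only [Pi.inv_apply, Real.tanh_eq_sinh_div_cosh]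
  field_simp

theorem hd_tanh (t : ℝ) : HasDerivAt Real.tanh (sech t ^ 2) t := by
  have hc := (Real.cosh_pos t).ne'
  have h := (Real.hasDerivAt_sinh t).div (Real.hasDerivAt_cosh t) hc
  have e : Real.tanh = Real.sinh / Real.cosh := by
    funext x; simp [Real.tanh_eq_sinh_div_cosh]
  rw [e]
  refine h.congr_deriv ?_
  have := Real.cosh_sq t
  simp only [sech]
  field_simp
  linarith

theorem tanh_sq_sech (t : ℝ) : Real.tanh t ^ 2 = 1 - sech t ^ 2 := by
  have hc := (Real.cosh_pos t).ne'
  have := Real.cosh_sq t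
  simp only [sech, Real.tanh_eq_sinh_div_cosh]
  field_simp
  linarith

theorem cosh_sech (t : ℝ) : Real.cosh t * sech t = 1 := by
  have hc := (Real.cosh_pos t).ne'
  simp only [sech]
  field_simp

theorem sinh_tanh (t : ℝ) : Real.sinh t = Real.tanh t * Real.cosh t := by
  have hc := (Real.cosh_pos t).ne'
  rw [Real.tanh_eq_sinh_div_cosh]
  field_simp

theorem hd_Phi_a (t : ℝ) : HasDerivAt Phi_a (3 * sech t ^ 4 - 2 * sech t ^ 2) t := by
  have h := (hd_tanh t).mul ((hd_sech t).pow 2)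
  refine h.congr_deriv ?_
  simp only [Pi.pow_apply]
  push_cast
  linear_combination (-2 * sech t ^ 2) * tanh_sq_sech t

theorem Phi_p0_eq (t : ℝ) : Phi_p0 t =
    (1/8) * (2 * Real.cosh t ^ 2 + 1 - 3 * sech t ^ 2 + 3 * (t * Phi_a t)) := by
  have hc := (Real.cosh_pos t).ne'
  have hs : Real.sinh t ^ 2 = Real.cosh t ^ 2 - 1 := by linarith [Real.cosh_sq t]
  have hT : Real.tanh t ^ 4 = (1 - sech t ^ 2) ^ 2 := by
    rw [← tanh_sq_sech]; ring
  have e : Phi_p0 t = (15/8) * (Real.tanh t ^ 2 * sech t ^ 2) + 3/8 * (t * Phi_a t)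
    - (1/4) * (Real.tanh t) ^ 2
    - (1/8) * (Real.sinh t) ^ 2
      * (15 * (Real.tanh t) ^ 4 - 25 * (Real.tanh t) ^ 2 + 8) := by
    simp only [Phi_p0, Phi_a]; ring
  rw [e, hs, hT, tanh_sq_sech]
  generalize Phi_a t = A
  simp only [sech]
  field_simp
  ring

theorem hd_p0 (t : ℝ) : HasDerivAt Phi_p0 ((1/8) * (4 * (Real.cosh t * Real.sinh t)
    + 9 * Phi_a t + 3 * (t * (3 * sech t ^ 4 - 2 * sech t ^ 2)))) t := by
  have e : Phi_p0 = fun t =>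
    (1/8) * (2 * Real.cosh t ^ 2 + 1 - 3 * sech t ^ 2 + 3 * (t * Phi_a t)) :=
    funext Phi_p0_eq
  rw [e]
  have h := ((((((Real.hasDerivAt_cosh t).fun_pow 2).const_mul 2).add_const 1).fun_sub
    (((hd_sech t).fun_pow 2).const_mul 3)).fun_add
    (((hasDerivAt_id' t).fun_mul (hd_Phi_a t)).const_mul 3)).const_mul (1/8 : ℝ)
  refine h.congr_deriv ?_
  simp only [Phi_a]
  push_cast
  ring

theorem hd_dPhi_a (t : ℝ) : HasDerivAt (fun t => 3 * sech t ^ 4 - 2 * sech t ^ 2)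
    ((4 - 12 * sech t ^ 2) * Phi_a t) t := by
  have h := (((hd_sech t).fun_pow 4).const_mul 3).fun_sub (((hd_sech t).fun_pow 2).const_mul 2)
  refine h.congr_deriv ?_
  simp only [Phi_a]
  push_cast
  ring

theorem hd_p0' (t : ℝ) : HasDerivAt (fun t => (1/8) * (4 * (Real.cosh t * Real.sinh t)
    + 9 * Phi_a t + 3 * (t * (3 * sech t ^ 4 - 2 * sech t ^ 2))))
    (2 - (12 * sech t ^ 2 - 4) * Phi_p0 t) t := by
  have h := (((((Real.hasDerivAt_cosh t).fun_mul (Real.hasDerivAt_sinh t)).const_mul 4).fun_add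
    ((hd_Phi_a t).const_mul 9)).fun_add
    (((hasDerivAt_id' t).fun_mul (hd_dPhi_a t)).const_mul 3)).const_mul (1/8 : ℝ)
  refine h.congr_deriv ?_
  rw [Phi_p0_eq]
  have h1 := cosh_sech t
  have h2 := Real.cosh_sq t
  linear_combination (-1/2) * h2 + 3 * (Real.cosh t * sech t + 1) * h1

theorem hd_p1 (t : ℝ) : HasDerivAt Phi_p1 ((Real.sqrt 2 / 8) * (2 * Real.cosh (2 * t) - 4
    + 18 * sech t ^ 2 - 36 * (t * Phi_a t)
    - (6 * t ^ 2 + 15) * (3 * sech t ^ 4 - 2 * sech t ^ 2))) t := by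
  have h2 : HasDerivAt (fun t : ℝ => 2 * t) 2 t := by
    simpa using (hasDerivAt_id' t).const_mul (2 : ℝ)
  have h := (((((h2.sinh).fun_sub ((hasDerivAt_id' t).const_mul 4)).fun_add
    ((hd_tanh t).const_mul 6)).fun_sub
    (((((hasDerivAt_id' t).fun_pow 2).const_mul 6).add_const 15).fun_mul (hd_Phi_a t))).fun_add
    (((hasDerivAt_id' t).const_mul 12).fun_mul ((hd_sech t).fun_pow 2))).const_mul
    (Real.sqrt 2 / 8)
  refine h.congr_deriv ?_
  simp only [Phi_a]
  push_cast
  ring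

theorem hd_p1' (t : ℝ) : HasDerivAt (fun t => (Real.sqrt 2 / 8) * (2 * Real.cosh (2 * t) - 4
    + 18 * sech t ^ 2 - 36 * (t * Phi_a t)
    - (6 * t ^ 2 + 15) * (3 * sech t ^ 4 - 2 * sech t ^ 2)))
    (2 * Real.sqrt 2 * t - (12 * sech t ^ 2 - 4) * Phi_p1 t) t := by
  have h2 : HasDerivAt (fun t : ℝ => 2 * t) 2 t := by
    simpa using (hasDerivAt_id' t).const_mul (2 : ℝ)
  have h := ((((((h2.cosh).const_mul 2).sub_const 4).fun_add
    (((hd_sech t).fun_pow 2).const_mul 18)).fun_sub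
    (((hasDerivAt_id' t).fun_mul (hd_Phi_a t)).const_mul 36)).fun_sub
    (((((hasDerivAt_id' t).fun_pow 2).const_mul 6).add_const 15).fun_mul
      (hd_dPhi_a t))).const_mul (Real.sqrt 2 / 8)
  refine h.congr_deriv ?_
  have h1 : Real.sinh (2 * t) * sech t ^ 2 = 2 * Real.tanh t := by
    rw [Real.sinh_two_mul, sinh_tanh]
    linear_combination (2 * Real.tanh t * (Real.cosh t * sech t + 1)) * cosh_sech t
  simp only [Phi_p1, Phi_a]
  push_cast
  linear_combination (Real.sqrt 2 / 8) * 12 * h1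

theorem deriv2_scale (f g h : ℝ → ℝ) (hf : ∀ t, HasDerivAt f (g t) t)
    (hg : ∀ t, HasDerivAt g (h t) t) (y : ℝ) :
    deriv (deriv (fun y : ℝ => f (y / Real.sqrt 2))) y = h (y / Real.sqrt 2) / 2 := by
  have hl : ∀ y : ℝ, HasDerivAt (fun y : ℝ => y / Real.sqrt 2) (1 / Real.sqrt 2) y :=
    fun y => (hasDerivAt_id' y).div_const _
  have e : deriv (fun y : ℝ => f (y / Real.sqrt 2)) =
      fun y => g (y / Real.sqrt 2) * (1 / Real.sqrt 2) :=
    funext fun y => ((hf _).comp y (hl y)).deriv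
  rw [e]
  have h2 : HasDerivAt (fun y => g (y / Real.sqrt 2) * (1 / Real.sqrt 2)) _ y :=
    ((hg _).comp y (hl y)).mul_const (1 / Real.sqrt 2)
  rw [h2.deriv]
  have hs : (1 / Real.sqrt 2) * (1 / Real.sqrt 2) = 1 / 2 := by
    rw [div_mul_div_comm, Real.mul_self_sqrt (by norm_num)]; norm_num
  rw [mul_assoc, hs]; ring

/-- `v₀(y) = Φₚ⁽⁰⁾(y/√2)` and `v₁(y) = Φₚ⁽¹⁾(y/√2)` are particular integrals of the
linearised equations with right-hand sides `1` and `y` respectively. -/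
theorem statement11 :
    (∀ y : ℝ,
      deriv (deriv (fun y : ℝ => Phi_p0 (y / Real.sqrt 2))) y
        + 2 * (3 * (sech (y / Real.sqrt 2)) ^ 2 - 1) * Phi_p0 (y / Real.sqrt 2) = 1) ∧
    (∀ y : ℝ,
      deriv (deriv (fun y : ℝ => Phi_p1 (y / Real.sqrt 2))) y
        + 2 * (3 * (sech (y / Real.sqrt 2)) ^ 2 - 1) * Phi_p1 (y / Real.sqrt 2) = y) := by
  refine ⟨fun y => ?_, fun y => ?_⟩
  · rw [deriv2_scale _ _ _ hd_p0 hd_p0' y]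
    ring
  · rw [deriv2_scale _ _ _ hd_p1 hd_p1' y]
    have : Real.sqrt 2 * (y / Real.sqrt 2) = y := by
      field_simp
    linear_combination this
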